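/- Let k ≥ 1, R > 0, and x ∈ E with ‖x‖ ≠ R. Then for every b ∈ ℝ: (i) ∫_{y ∈ S^k(R)} ω(x,y)^{k/2 + ib} dμH[k](y) = ∫_{y ∈ S^k(R)} ω(x,y)^{k/2} · cos(b · Real.log ω(x,y)) dμH[k](y) (the left side a ℂ-valued integral, the right side real); and (ii) for every natural number m, ∫_{y ∈ S^k(R)} ω(x,y)^{k/2} · (Real.log ω(x,y))^{2m+1} · cos(b · Real.log ω(x,y)) dμH[k](y) = 0 and ∫_{y ∈ S^k(R)} ω(x,y)^{k/2} · (Real.log ω(x,y))^{2m} · sin(b · Real.log ω(x,y)) dμH[k](y) = 0. -/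

import Mathlib

open MeasureTheory Real Complex

/-!
The line through `x` and a point `y` of the sphere meets the sphere again in a point `T y`, and
the power of `x` gives `ω(x, T y) = ω(x, y)⁻¹`. As an inversion centred at `x`, up to sign, `T`
satisfies `dist (T y) (T z) = √ω(x, y) * √ω(x, z) * dist y z`. On a layer `a ≤ ω ≤ a * t` it is
therefore Lipschitz with constant `a * t`; cutting the sphere into such layers and letting `t → 1`
shows that `T` distorts `μH[k]` by a factor of at most `ω ^ k`. Since `T` is an involution, the
weighted measure `ω ^ (k / 2) dμH[k]` is then invariant under `T`, so it integrates to zero any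
function of `ω` that is odd in `log ω`.
-/

section ConformalFactor

open scoped NNReal ENNReal Topology
open Set Filter

variable {X Y : Type*} [EMetricSpace X] [MeasurableSpace X] [BorelSpace X]
  [EMetricSpace Y] [MeasurableSpace Y] [BorelSpace Y]
  {f : X → Y} {w : X → ℝ≥0} {s : Set X} {d : ℝ}

lemma hausdorffMeasure_image_le_of_mem_Icc (hd : 0 ≤ d) (hw : Measurable w)
    (hf : ∀ y ∈ s, ∀ z ∈ s, edist (f y) (f z) ≤ (w y).sqrt * (w z).sqrt * edist y z)
    {a t : ℝ≥0} (hs : ∀ y ∈ s, w y ∈ Icc a (a * t)) :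
    μH[d] (f '' s) ≤ (t : ℝ≥0∞) ^ d * ∫⁻ y in s, (w y : ℝ≥0∞) ^ d ∂μH[d] := by
  have hLip : LipschitzOnWith (a * t) f s := by
    intro y hy z hz
    refine (hf y hy z hz).trans ?_
    rw [← NNReal.mul_self_sqrt (a * t), ENNReal.coe_mul]
    gcongr
    exacts [(hs y hy).2, (hs z hz).2]
  calc μH[d] (f '' s)
      ≤ ((a * t : ℝ≥0) : ℝ≥0∞) ^ d * μH[d] s := hLip.hausdorffMeasure_image_le hd
    _ = (t : ℝ≥0∞) ^ d * ∫⁻ _ in s, (a : ℝ≥0∞) ^ d ∂μH[d] := by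
        rw [setLIntegral_const, ENNReal.coe_mul, ENNReal.mul_rpow_of_nonneg _ _ hd]
        ring
    _ ≤ (t : ℝ≥0∞) ^ d * ∫⁻ y in s, (w y : ℝ≥0∞) ^ d ∂μH[d] := by
        refine mul_le_mul' le_rfl
          (setLIntegral_mono (hw.coe_nnreal_ennreal.pow_const d) fun y hy => ?_)
        gcongr
        exact (hs y hy).1

lemma hausdorffMeasure_image_le_rpow_mul_lintegral (hd : 0 ≤ d) (hw : Measurable w)
    (hs : MeasurableSet s) (hpos : ∀ y ∈ s, 0 < w y)
    (hf : ∀ y ∈ s, ∀ z ∈ s, edist (f y) (f z) ≤ (w y).sqrt * (w z).sqrt * edist y z)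
    {t : ℝ≥0} (ht : 1 < t) :
    μH[d] (f '' s) ≤ (t : ℝ≥0∞) ^ d * ∫⁻ y in s, (w y : ℝ≥0∞) ^ d ∂μH[d] := by
  let piece : ℤ → Set X := fun n => s ∩ w ⁻¹' Ico (t ^ n) (t ^ (n + 1))
  have hpiece : ∀ n, MeasurableSet (piece n) := fun n => hs.inter (hw measurableSet_Ico)
  have hdisj : Pairwise (Function.onFun Disjoint piece) := fun m n hmn =>
    (Disjoint.preimage w ((zpow_right_mono₀ ht.le).pairwise_disjoint_on_Ico_succ hmn)).mono
      inter_subset_right inter_subset_right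
  have hcover : s = ⋃ n, piece n := by
    rw [← inter_iUnion, ← preimage_iUnion, eq_comm, inter_eq_left]
    exact fun y hy => mem_iUnion.2 (exists_mem_Ico_zpow (hpos y hy) ht)
  calc μH[d] (f '' s)
      = μH[d] (⋃ n, f '' piece n) := by rw [← image_iUnion, ← hcover]
    _ ≤ ∑' n, μH[d] (f '' piece n) := measure_iUnion_le _
    _ ≤ ∑' n, (t : ℝ≥0∞) ^ d * ∫⁻ y in piece n, (w y : ℝ≥0∞) ^ d ∂μH[d] := by
        refine ENNReal.tsum_le_tsum fun n => hausdorffMeasure_image_le_of_mem_Icc hd hw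
          (fun y hy z hz => hf y hy.1 z hz.1) (a := t ^ n) fun y hy => ?_
        rw [← zpow_add_one₀ (zero_lt_one.trans ht).ne']
        exact Ico_subset_Icc_self hy.2
    _ = (t : ℝ≥0∞) ^ d * ∫⁻ y in s, (w y : ℝ≥0∞) ^ d ∂μH[d] := by
        rw [ENNReal.tsum_mul_left, ← lintegral_iUnion hpiece hdisj, ← hcover]

lemma hausdorffMeasure_image_le_lintegral (hd : 0 ≤ d) (hw : Measurable w)
    (hs : MeasurableSet s) (hpos : ∀ y ∈ s, 0 < w y)
    (hf : ∀ y ∈ s, ∀ z ∈ s, edist (f y) (f z) ≤ (w y).sqrt * (w z).sqrt * edist y z) :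
    μH[d] (f '' s) ≤ ∫⁻ y in s, (w y : ℝ≥0∞) ^ d ∂μH[d] := by
  set I := ∫⁻ y in s, (w y : ℝ≥0∞) ^ d ∂μH[d]
  have hrpow : Tendsto (fun t : ℝ≥0 => (t : ℝ≥0∞) ^ d) (𝓝[>] 1) (𝓝 1) := by
    have hcont : Continuous fun t : ℝ≥0 => (t : ℝ≥0∞) ^ d := by fun_prop
    simpa using (hcont.tendsto 1).mono_left nhdsWithin_le_nhds
  have hlim : Tendsto (fun t : ℝ≥0 => (t : ℝ≥0∞) ^ d * I) (𝓝[>] 1) (𝓝 I) := by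
    simpa using ENNReal.Tendsto.mul_const (b := I) hrpow (Or.inl one_ne_zero)
  refine ge_of_tendsto hlim ?_
  filter_upwards [self_mem_nhdsWithin] with t ht
  exact hausdorffMeasure_image_le_rpow_mul_lintegral hd hw hs hpos hf ht

end ConformalFactor

section Involution

open scoped ENNReal

variable {α : Type*} [MeasurableSpace α] {μ : Measure α} {T : α → α} {w : α → ℝ≥0∞}

lemma map_withDensity_le_of_map_le (hT : Measurable T) (hw : Measurable w)
    (hw0 : ∀ᵐ y ∂μ, w y ≠ 0) (hwtop : ∀ᵐ y ∂μ, w y ≠ ∞)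
    (hwT : ∀ᵐ y ∂μ, w (T y) = (w y)⁻¹)
    (hmap : μ.map T ≤ μ.withDensity fun y => w y ^ 2) :
    (μ.withDensity w).map T ≤ μ.withDensity w := by
  refine Measure.le_iff.2 fun A hA => ?_
  calc (μ.withDensity w).map T A
      = ∫⁻ y in T ⁻¹' A, w y ∂μ := by
        rw [Measure.map_apply hT hA, withDensity_apply _ (hT hA)]
    _ = ∫⁻ y in T ⁻¹' A, (w (T y))⁻¹ ∂μ := by
        refine lintegral_congr_ae (ae_restrict_of_ae ?_)
        filter_upwards [hwT] with y hy
        rw [hy, inv_inv]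
    _ = ∫⁻ y in A, (w y)⁻¹ ∂μ.map T := (setLIntegral_map hA hw.inv hT).symm
    _ ≤ ∫⁻ y in A, (w y)⁻¹ ∂μ.withDensity fun y => w y ^ 2 := by gcongr
    _ = ∫⁻ y in A, w y ^ 2 * (w y)⁻¹ ∂μ :=
        setLIntegral_withDensity_eq_setLIntegral_mul _ (hw.pow_const 2) hw.inv hA
    _ = ∫⁻ y in A, w y ∂μ := by
        refine lintegral_congr_ae (ae_restrict_of_ae ?_)
        filter_upwards [hw0, hwtop] with y h0 htop
        rw [sq, mul_assoc, ENNReal.mul_inv_cancel h0 htop, mul_one]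
    _ = μ.withDensity w A := (withDensity_apply _ hA).symm

lemma measurePreserving_of_map_le_of_involutive (hT : Measurable T)
    (hinv : ∀ᵐ y ∂μ, T (T y) = y) (hmap : μ.map T ≤ μ) : MeasurePreserving T μ μ := by
  refine ⟨hT, le_antisymm hmap ?_⟩
  calc μ = (μ.map T).map T := by
        rw [Measure.map_map hT hT, Measure.map_congr (f := T ∘ T) (g := id) hinv, Measure.map_id]
    _ ≤ μ.map T := Measure.map_mono hmap hT

end Involution

section Omega

variable {E : Type*} [NormedAddCommGroup E] {x y : E}

/-- The quantity `ω(x, y)` of the statement, comparing the power of `x` with respect to the sphere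
centred at `0` through `y` with the squared distance from `x` to `y`. -/
noncomputable def omega (x y : E) : ℝ := |‖x‖ ^ 2 - ‖y‖ ^ 2| / ‖x - y‖ ^ 2

lemma omega_nonneg (x y : E) : 0 ≤ omega x y := by
  unfold omega
  positivity

lemma norm_sq_sub_norm_sq_ne_zero (h : ‖x‖ ≠ ‖y‖) : ‖x‖ ^ 2 - ‖y‖ ^ 2 ≠ 0 :=
  sub_ne_zero.2 fun hsq => h ((sq_eq_sq₀ (norm_nonneg x) (norm_nonneg y)).1 hsq)

lemma norm_sub_pos_of_norm_ne (h : ‖x‖ ≠ ‖y‖) : 0 < ‖x - y‖ :=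
  norm_pos_iff.2 (sub_ne_zero.2 (ne_of_apply_ne norm h))

lemma omega_pos (h : ‖x‖ ≠ ‖y‖) : 0 < omega x y :=
  div_pos (abs_pos.2 (norm_sq_sub_norm_sq_ne_zero h)) (pow_pos (norm_sub_pos_of_norm_ne h) 2)

lemma omega_le (h : ‖x‖ ≠ ‖y‖) : omega x y ≤ (‖x‖ + ‖y‖) / |‖x‖ - ‖y‖| := by
  have hpos : 0 < |‖x‖ - ‖y‖| := abs_pos.2 (sub_ne_zero.2 h)
  calc omega x y
      ≤ |‖x‖ ^ 2 - ‖y‖ ^ 2| / |‖x‖ - ‖y‖| ^ 2 :=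
        div_le_div_of_nonneg_left (abs_nonneg _) (pow_pos hpos 2)
          (pow_le_pow_left₀ hpos.le (abs_norm_sub_norm_le x y) 2)
    _ = (‖x‖ + ‖y‖) / |‖x‖ - ‖y‖| := by
        rw [sq_sub_sq, abs_mul, abs_of_nonneg (by positivity : 0 ≤ ‖x‖ + ‖y‖)]
        field_simp

@[fun_prop]
lemma measurable_omega [MeasurableSpace E] [OpensMeasurableSpace E] (x : E) :
    Measurable (omega x) := by
  unfold omega
  fun_prop

end Omega

section SecantMap

variable {E : Type*} [NormedAddCommGroup E] [InnerProductSpace ℝ E] {x y z : E}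

/-- The second intersection of the line through `x` and `y` with the sphere centred at `0`
through `y`, written as an inversion centred at `x` with the signed power `‖x‖ ^ 2 - ‖y‖ ^ 2`. -/
noncomputable def secantMap (x y : E) : E :=
  x + ((‖x‖ ^ 2 - ‖y‖ ^ 2) / ‖x - y‖ ^ 2) • (y - x)

lemma norm_secantMap (x y : E) : ‖secantMap x y‖ = ‖y‖ := by
  rcases eq_or_ne x y with rfl | hxy
  · simp [secantMap]
  have hpos : ‖x - y‖ ≠ 0 := norm_ne_zero_iff.2 (sub_ne_zero.2 hxy)
  have hinner : inner ℝ x (y - x) = (‖y‖ ^ 2 - ‖x‖ ^ 2 - ‖x - y‖ ^ 2) / 2 := by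
    have := norm_add_sq_real x (y - x)
    rw [add_sub_cancel, norm_sub_rev] at this
    linarith
  rw [← sq_eq_sq₀ (norm_nonneg _) (norm_nonneg _), secantMap, norm_add_sq_real, inner_smul_right,
    hinner, norm_smul, mul_pow, Real.norm_eq_abs, sq_abs, norm_sub_rev y x]
  field_simp
  ring

lemma norm_sub_secantMap (x y : E) :
    ‖x - secantMap x y‖ = |‖x‖ ^ 2 - ‖y‖ ^ 2| / ‖x - y‖ := by
  rcases eq_or_ne x y with rfl | hxy
  · simp [secantMap]
  have hpos : ‖x - y‖ ≠ 0 := norm_ne_zero_iff.2 (sub_ne_zero.2 hxy)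
  rw [secantMap, sub_add_cancel_left, norm_neg, norm_smul, norm_sub_rev y x, norm_div,
    Real.norm_eq_abs, norm_pow, norm_norm]
  field_simp

lemma omega_secantMap (x y : E) : omega x (secantMap x y) = (omega x y)⁻¹ := by
  rw [omega, norm_secantMap, norm_sub_secantMap, omega, div_pow, inv_div]
  rcases eq_or_ne |‖x‖ ^ 2 - ‖y‖ ^ 2| 0 with h | h
  · simp [h]
  · field_simp

lemma secantMap_secantMap (h : ‖x‖ ≠ ‖y‖) : secantMap x (secantMap x y) = y := by
  have hc := norm_sq_sub_norm_sq_ne_zero h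
  have hpos := (norm_sub_pos_of_norm_ne h).ne'
  have hsub : secantMap x y - x = ((‖x‖ ^ 2 - ‖y‖ ^ 2) / ‖x - y‖ ^ 2) • (y - x) :=
    add_sub_cancel_left _ _
  have hscale : (‖x‖ ^ 2 - ‖y‖ ^ 2) / (|‖x‖ ^ 2 - ‖y‖ ^ 2| / ‖x - y‖) ^ 2
      * ((‖x‖ ^ 2 - ‖y‖ ^ 2) / ‖x - y‖ ^ 2) = 1 := by
    rw [div_pow, sq_abs]
    field_simp
  rw [secantMap, norm_secantMap, norm_sub_secantMap, hsub, smul_smul, hscale, one_smul,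
    add_sub_cancel]

lemma dist_secantMap (hxy : ‖x‖ ≠ ‖y‖) (hyz : ‖y‖ = ‖z‖) :
    dist (secantMap x y) (secantMap x z) = √(omega x y) * √(omega x z) * dist y z := by
  set c := ‖x‖ ^ 2 - ‖y‖ ^ 2 with hc
  have hcpos : 0 < |c| := abs_pos.2 (norm_sq_sub_norm_sq_ne_zero hxy)
  have hy : y - x ≠ 0 := sub_ne_zero.2 (ne_of_apply_ne norm hxy.symm)
  have hz : z - x ≠ 0 := sub_ne_zero.2 (ne_of_apply_ne norm (hyz ▸ hxy.symm))
  have hscale : ∀ u : E, (c / ‖u‖ ^ 2) • u = (c / |c|) • (√|c| / ‖u‖) ^ 2 • u := fun u => by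
    rw [smul_smul, div_pow, Real.sq_sqrt (abs_nonneg c), div_mul_div_cancel₀ hcpos.ne']
  have hsqrt : ∀ u : E, √(|c| / ‖u‖ ^ 2) = √|c| / ‖u‖ := fun u => by
    rw [Real.sqrt_div (abs_nonneg c), Real.sqrt_sq (norm_nonneg u)]
  calc dist (secantMap x y) (secantMap x z)
      = dist ((√|c| / ‖y - x‖) ^ 2 • (y - x)) ((√|c| / ‖z - x‖) ^ 2 • (z - x)) := by
        rw [secantMap, secantMap, ← hyz, ← hc, dist_add_left, norm_sub_rev x y, norm_sub_rev x z,
          hscale, hscale, dist_smul₀, norm_div, Real.norm_eq_abs, Real.norm_eq_abs, abs_abs,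
          div_self hcpos.ne', one_mul]
    _ = √|c| ^ 2 / (‖y - x‖ * ‖z - x‖) * dist y z := by
        rw [dist_div_norm_sq_smul hy hz, dist_sub_right]
    _ = √(omega x y) * √(omega x z) * dist y z := by
        rw [omega, omega, ← hyz, ← hc, hsqrt, hsqrt, norm_sub_rev x y, norm_sub_rev x z]
        ring

lemma edist_secantMap (hxy : ‖x‖ ≠ ‖y‖) (hyz : ‖y‖ = ‖z‖) :
    edist (secantMap x y) (secantMap x z)
      = (omega x y).toNNReal.sqrt * (omega x z).toNNReal.sqrt * edist y z := by
  rw [edist_dist, dist_secantMap hxy hyz, ENNReal.ofReal_mul (by positivity),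
    ENNReal.ofReal_mul (by positivity), edist_dist, Real.sqrt, Real.sqrt,
    ENNReal.ofReal_coe_nnreal, ENNReal.ofReal_coe_nnreal]

lemma measurable_secantMap [MeasurableSpace E] [BorelSpace E] [SecondCountableTopology E] (x : E) :
    Measurable (secantMap x) := by
  unfold secantMap
  fun_prop

end SecantMap

section OmegaMeasure

open Metric

variable {E : Type*} [NormedAddCommGroup E] [MeasurableSpace E] [BorelSpace E]

/-- The measure `ω(x, y) ^ (d / 2) dμH[d](y)` on the sphere of radius `R` centred at `0`, in which
the Jacobian of `secantMap x` is absorbed by the weight. -/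
noncomputable def omegaMeasure (d R : ℝ) (x : E) : Measure E :=
  (μH[d].restrict (sphere 0 R)).withDensity fun y => ENNReal.ofReal (omega x y) ^ (d / 2)

lemma integral_omegaMeasure {d : ℝ} (hd : 0 ≤ d) (R : ℝ) (x : E) (f : E → ℝ) :
    ∫ y, f y ∂omegaMeasure d R x
      = ∫ y in sphere (0 : E) R, omega x y ^ (d / 2) * f y ∂μH[d] := by
  rw [omegaMeasure, integral_withDensity_eq_integral_toReal_smul (by fun_prop)]
  · simp only [← ENNReal.toReal_rpow, ENNReal.toReal_ofReal (omega_nonneg x _), smul_eq_mul]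
  · filter_upwards with y
    finiteness

end OmegaMeasure

section OddIntegral

open Metric

variable {E : Type*} [NormedAddCommGroup E] [InnerProductSpace ℝ E]
  [MeasurableSpace E] [BorelSpace E] [SecondCountableTopology E] {x : E} {R d : ℝ}

lemma map_secantMap_hausdorffMeasure_le (hd : 0 ≤ d) (hx : ‖x‖ ≠ R) :
    (μH[d].restrict (sphere (0 : E) R)).map (secantMap x)
      ≤ (μH[d].restrict (sphere 0 R)).withDensity fun y => ENNReal.ofReal (omega x y) ^ d := by
  have hT := measurable_secantMap x
  have hne : ∀ y ∈ sphere (0 : E) R, ‖x‖ ≠ ‖y‖ := fun y hy => by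
    rwa [mem_sphere_zero_iff_norm.1 hy]
  refine Measure.le_iff.2 fun A hA => ?_
  have hAS : MeasurableSet (A ∩ sphere (0 : E) R) := hA.inter isClosed_sphere.measurableSet
  have hsub : secantMap x ⁻¹' A ∩ sphere 0 R ⊆ secantMap x '' (A ∩ sphere 0 R) :=
    fun y ⟨hyA, hyS⟩ => ⟨secantMap x y, ⟨hyA, by simpa [norm_secantMap] using hyS⟩,
      secantMap_secantMap (hne y hyS)⟩
  calc (μH[d].restrict (sphere (0 : E) R)).map (secantMap x) A
      = μH[d] (secantMap x ⁻¹' A ∩ sphere 0 R) := by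
        rw [Measure.map_apply hT hA, Measure.restrict_apply (hT hA)]
    _ ≤ μH[d] (secantMap x '' (A ∩ sphere 0 R)) := measure_mono hsub
    _ ≤ ∫⁻ y in A ∩ sphere 0 R, ENNReal.ofReal (omega x y) ^ d ∂μH[d] :=
        hausdorffMeasure_image_le_lintegral hd (measurable_omega x).real_toNNReal hAS
          (fun y hy => Real.toNNReal_pos.2 (omega_pos (hne y hy.2)))
          fun y hy z hz => (edist_secantMap (hne y hy.2) <| by
            rw [mem_sphere_zero_iff_norm.1 hy.2, mem_sphere_zero_iff_norm.1 hz.2]).le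
    _ = (μH[d].restrict (sphere 0 R)).withDensity (fun y => ENNReal.ofReal (omega x y) ^ d) A := by
        rw [withDensity_apply _ hA, Measure.restrict_restrict hA]

lemma measurePreserving_secantMap (hd : 0 ≤ d) (hx : ‖x‖ ≠ R) :
    MeasurePreserving (secantMap x) (omegaMeasure d R x) (omegaMeasure d R x) := by
  have hT := measurable_secantMap x
  have hne : ∀ᵐ y ∂μH[d].restrict (sphere (0 : E) R), ‖x‖ ≠ ‖y‖ := by
    filter_upwards [ae_restrict_mem isClosed_sphere.measurableSet] with y hy
    rwa [mem_sphere_zero_iff_norm.1 hy]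
  refine measurePreserving_of_map_le_of_involutive hT
    ((withDensity_absolutelyContinuous _ _).ae_le (hne.mono fun y => secantMap_secantMap))
    (map_withDensity_le_of_map_le hT (by fun_prop) ?_ ?_ ?_ ?_)
  · filter_upwards [hne] with y hy
    simp [omega_pos hy]
  · filter_upwards with y
    finiteness
  · filter_upwards [hne] with y hy
    rw [omega_secantMap, ENNReal.ofReal_inv_of_pos (omega_pos hy), ENNReal.inv_rpow]
  · convert map_secantMap_hausdorffMeasure_le hd hx using 3 with y
    rw [← ENNReal.rpow_mul_natCast, Nat.cast_ofNat, div_mul_cancel₀ d two_ne_zero]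

lemma setIntegral_sphere_omega_rpow_mul_eq_zero (hd : 0 ≤ d) (hx : ‖x‖ ≠ R) {F : ℝ → ℝ}
    (hF : Measurable F) (hodd : ∀ w, F w⁻¹ = -F w) :
    ∫ y in sphere (0 : E) R, omega x y ^ (d / 2) * F (omega x y) ∂μH[d] = 0 := by
  have hT := measurePreserving_secantMap hd hx
  rw [← integral_omegaMeasure hd R x fun y => F (omega x y)]
  have hself : ∫ y, F (omega x y) ∂omegaMeasure d R x = -∫ y, F (omega x y) ∂omegaMeasure d R x :=
    calc ∫ y, F (omega x y) ∂omegaMeasure d R x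
        = ∫ y, F (omega x y) ∂(omegaMeasure d R x).map (secantMap x) := by rw [hT.map_eq]
      _ = ∫ y, F (omega x (secantMap x y)) ∂omegaMeasure d R x :=
          integral_map hT.aemeasurable (hF.comp (measurable_omega x)).aestronglyMeasurable
      _ = -∫ y, F (omega x y) ∂omegaMeasure d R x := by
          simp only [omega_secantMap, hodd, integral_neg]
  linarith

end OddIntegral

section SphereMeasure

open scoped Pointwise
open Metric Module

lemma hausdorffMeasure_image_lt_top_of_contDiff {F E : Type*}
    [NormedAddCommGroup F] [NormedSpace ℝ F] [FiniteDimensional ℝ F]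
    [NormedAddCommGroup E] [NormedSpace ℝ E] [MeasurableSpace E] [BorelSpace E]
    {f : F → E} (hf : ContDiff ℝ 1 f) {K : Set F} (hK : IsCompact K) :
    μH[finrank ℝ F] (f '' K) < ⊤ := by
  borelize F
  obtain ⟨C, hC⟩ := hf.locallyLipschitz.locallyLipschitzOn.exists_lipschitzOnWith_of_compact hK
  exact (hC.hausdorffMeasure_image_le (Nat.cast_nonneg _)).trans_lt
    (ENNReal.mul_lt_top (by finiteness) hK.measure_lt_top)

variable {E : Type*} [NormedAddCommGroup E] [InnerProductSpace ℝ E]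

lemma hemisphere_subset_image_stereoInvFunAux {v : E} (hv : ‖v‖ = 1) :
    {y ∈ sphere (0 : E) 1 | inner ℝ v y ≤ 0}
      ⊆ (fun u : (ℝ ∙ v)ᗮ => stereoInvFunAux v u) '' closedBall 0 2 := by
  rintro y ⟨hy, hvy⟩
  have hyv : y ≠ v := by
    rintro rfl
    norm_num [real_inner_self_eq_norm_sq, hv] at hvy
  refine ⟨stereoToFun v y, ?_, congrArg Subtype.val (stereo_left_inv hv (x := ⟨y, hy⟩) hyv)⟩
  rw [mem_closedBall_zero_iff, stereoToFun_apply, norm_smul, innerSL_apply_apply, norm_div,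
    Real.norm_eq_abs, Real.norm_eq_abs, abs_two, abs_of_pos (by linarith)]
  calc 2 / (1 - inner ℝ v y) * ‖(ℝ ∙ v)ᗮ.orthogonalProjectionOnto y‖
      ≤ 2 / 1 * ‖y‖ := by
        gcongr
        · linarith
        · exact (ℝ ∙ v)ᗮ.norm_orthogonalProjectionOnto_apply_le y
    _ = 2 := by rw [mem_sphere_zero_iff_norm.1 hy]; norm_num

variable [MeasurableSpace E] [BorelSpace E] {k : ℕ}

lemma hausdorffMeasure_hemisphere_lt_top (hE : finrank ℝ E = k + 1) {v : E} (hv : ‖v‖ = 1) :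
    μH[k] {y ∈ sphere (0 : E) 1 | inner ℝ v y ≤ 0} < ⊤ := by
  have : FiniteDimensional ℝ E := Module.finite_of_finrank_eq_succ hE
  have hdim : finrank ℝ (ℝ ∙ v)ᗮ = k := by
    have : Fact (finrank ℝ E = k + 1) := ⟨hE⟩
    exact Submodule.finrank_orthogonal_span_singleton (norm_ne_zero_iff.1 (by simp [hv]))
  have hchart : ContDiff ℝ 1 fun u : (ℝ ∙ v)ᗮ => stereoInvFunAux v u :=
    contDiff_stereoInvFunAux.comp (ℝ ∙ v)ᗮ.subtypeL.contDiff
  have hfin := hausdorffMeasure_image_lt_top_of_contDiff hchart (isCompact_closedBall 0 2)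
  rw [hdim] at hfin
  exact (measure_mono (hemisphere_subset_image_stereoInvFunAux hv)).trans_lt hfin

lemma hausdorffMeasure_unitSphere_lt_top (hE : finrank ℝ E = k + 1) :
    μH[k] (sphere (0 : E) 1) < ⊤ := by
  have : Nontrivial E := nontrivial_of_finrank_eq_succ hE
  obtain ⟨v, hv⟩ := exists_norm_eq E zero_le_one
  have hcover : sphere (0 : E) 1 ⊆ {y ∈ sphere (0 : E) 1 | inner ℝ v y ≤ 0}
      ∪ {y ∈ sphere (0 : E) 1 | inner ℝ (-v) y ≤ 0} := fun y hy => by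
    rcases le_total (inner ℝ v y) 0 with h | h
    · exact Or.inl ⟨hy, h⟩
    · exact Or.inr ⟨hy, by rwa [inner_neg_left, neg_nonpos]⟩
  exact (measure_mono hcover).trans_lt (measure_union_lt_top
    (hausdorffMeasure_hemisphere_lt_top hE hv)
    (hausdorffMeasure_hemisphere_lt_top hE (by rwa [norm_neg])))

lemma hausdorffMeasure_sphere_lt_top (hE : finrank ℝ E = k + 1) (R : ℝ) :
    μH[k] (sphere (0 : E) R) < ⊤ := by
  have : Nontrivial E := nontrivial_of_finrank_eq_succ hE
  rcases lt_or_ge R 0 with hR | hR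
  · simp [sphere_eq_empty_of_neg hR]
  have hsphere : sphere (0 : E) R = R • sphere 0 1 := by
    rw [smul_sphere R 0 zero_le_one, smul_zero, Real.norm_of_nonneg hR, mul_one]
  rw [hsphere]
  exact ((lipschitzWith_smul R).hausdorffMeasure_image_le (Nat.cast_nonneg k) _).trans_lt
    (ENNReal.mul_lt_top (by finiteness) (hausdorffMeasure_unitSphere_lt_top hE))

end SphereMeasure

lemma ofReal_cpow_add_I_mul {w : ℝ} (hw : 0 < w) (a b : ℝ) :
    (w : ℂ) ^ ((a : ℂ) + I * b)
      = ⟨w ^ a * Real.cos (b * Real.log w), w ^ a * Real.sin (b * Real.log w)⟩ := by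
  have hw0 : (w : ℂ) ≠ 0 := mod_cast hw.ne'
  have hphase : (w : ℂ) ^ (I * b)
      = Complex.cos ↑(b * Real.log w) + Complex.sin ↑(b * Real.log w) * I := by
    rw [Complex.cpow_def_of_ne_zero hw0, ← Complex.ofReal_log hw.le, ← Complex.exp_mul_I]
    push_cast
    ring_nf
  rw [Complex.cpow_add _ _ hw0, ← Complex.ofReal_cpow hw.le, hphase, Complex.mk_eq_add_mul_I]
  push_cast
  ring

section General

open Metric Module

variable {E : Type*} [NormedAddCommGroup E] [InnerProductSpace ℝ E]
  [MeasurableSpace E] [BorelSpace E] {k : ℕ} {x : E} {R : ℝ}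

lemma integrableOn_sphere_omega_cpow (hE : finrank ℝ E = k + 1) (hx : ‖x‖ ≠ R) {s : ℂ}
    (hs : 0 ≤ s.re) : IntegrableOn (fun y => (omega x y : ℂ) ^ s) (sphere 0 R) μH[k] := by
  have : FiniteDimensional ℝ E := Module.finite_of_finrank_eq_succ hE
  refine Measure.integrableOn_of_bounded (M := ((‖x‖ + R) / |‖x‖ - R|) ^ s.re)
    (hausdorffMeasure_sphere_lt_top hE R).ne
    ((Complex.measurable_ofReal.comp (measurable_omega x)).pow_const s).aestronglyMeasurable ?_
  filter_upwards [ae_restrict_mem isClosed_sphere.measurableSet] with y hy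
  have hyR : ‖y‖ = R := mem_sphere_zero_iff_norm.1 hy
  subst hyR
  rw [Complex.norm_cpow_eq_rpow_re_of_pos (omega_pos hx)]
  exact Real.rpow_le_rpow (omega_nonneg x y) (omega_le hx) hs

lemma setIntegral_sphere_omega_cpow (hE : finrank ℝ E = k + 1) (hx : ‖x‖ ≠ R) (b : ℝ) :
    ∫ y in sphere (0 : E) R, (omega x y : ℂ) ^ ((k : ℂ) / 2 + I * b) ∂μH[k]
      = ((∫ y in sphere (0 : E) R,
          omega x y ^ ((k : ℝ) / 2) * Real.cos (b * Real.log (omega x y)) ∂μH[k] : ℝ) : ℂ) := by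
  have : FiniteDimensional ℝ E := Module.finite_of_finrank_eq_succ hE
  have hexp : (k : ℂ) / 2 + I * b = ((k / 2 : ℝ) : ℂ) + I * b := by push_cast; rfl
  have hk : (0 : ℝ) ≤ k / 2 := by positivity
  have hint : IntegrableOn (fun y => (omega x y : ℂ) ^ ((k : ℂ) / 2 + I * b)) (sphere 0 R) μH[k] :=
    integrableOn_sphere_omega_cpow hE hx (by simpa using hk)
  have hS : MeasurableSet (sphere (0 : E) R) := isClosed_sphere.measurableSet
  have hpos : ∀ y ∈ sphere (0 : E) R, 0 < omega x y := fun y hy =>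
    omega_pos (by rwa [mem_sphere_zero_iff_norm.1 hy])
  have hre : ∀ y ∈ sphere (0 : E) R, RCLike.re ((omega x y : ℂ) ^ ((k : ℂ) / 2 + I * b))
      = omega x y ^ ((k : ℝ) / 2) * Real.cos (b * Real.log (omega x y)) := fun y hy => by
    rw [hexp, ofReal_cpow_add_I_mul (hpos y hy)]
    rfl
  have him : ∀ y ∈ sphere (0 : E) R, RCLike.im ((omega x y : ℂ) ^ ((k : ℂ) / 2 + I * b))
      = omega x y ^ ((k : ℝ) / 2) * Real.sin (b * Real.log (omega x y)) := fun y hy => by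
    rw [hexp, ofReal_cpow_add_I_mul (hpos y hy)]
    rfl
  have hsin := setIntegral_sphere_omega_rpow_mul_eq_zero (F := fun w => Real.sin (b * Real.log w))
    k.cast_nonneg hx (by fun_prop) fun w => by simp
  rw [← setIntegral_re_add_im hint, setIntegral_congr_fun hS hre, setIntegral_congr_fun hS him,
    hsin, RCLike.ofReal_zero, zero_mul, add_zero]
  rfl

theorem omega_half_power_integrals_general (hE : finrank ℝ E = k + 1) (R : ℝ) (hx : ‖x‖ ≠ R)
    (b : ℝ) :
    (∫ y in sphere (0 : E) R, (omega x y : ℂ) ^ ((k : ℂ) / 2 + I * b) ∂μH[k]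
      = ((∫ y in sphere (0 : E) R,
          omega x y ^ ((k : ℝ) / 2) * Real.cos (b * Real.log (omega x y)) ∂μH[k] : ℝ) : ℂ))
    ∧ ∀ m : ℕ,
      (∫ y in sphere (0 : E) R, omega x y ^ ((k : ℝ) / 2) * Real.log (omega x y) ^ (2 * m + 1)
          * Real.cos (b * Real.log (omega x y)) ∂μH[k] = 0)
      ∧ ∫ y in sphere (0 : E) R, omega x y ^ ((k : ℝ) / 2) * Real.log (omega x y) ^ (2 * m)
          * Real.sin (b * Real.log (omega x y)) ∂μH[k] = 0 := by
  have : FiniteDimensional ℝ E := Module.finite_of_finrank_eq_succ hE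
  have hodd {F : ℝ → ℝ} := setIntegral_sphere_omega_rpow_mul_eq_zero (F := F) k.cast_nonneg hx
  refine ⟨setIntegral_sphere_omega_cpow hE hx b, fun m => ⟨?_, ?_⟩⟩
  · simpa only [mul_assoc] using
      hodd (F := fun w => Real.log w ^ (2 * m + 1) * Real.cos (b * Real.log w))
        (by fun_prop) fun w => by simp [(odd_two_mul_add_one m).neg_pow]
  · simpa only [mul_assoc] using
      hodd (F := fun w => Real.log w ^ (2 * m) * Real.sin (b * Real.log w))
        (by fun_prop) fun w => by simp [(even_two_mul m).neg_pow]

end General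

/-- (i) `∫ ω^{k/2+ib} = ∫ ω^{k/2} cos(b log ω)` and (ii) the odd/even log-moment integrals
`∫ ω^{k/2} (log ω)^{2m+1} cos(b log ω)` and `∫ ω^{k/2} (log ω)^{2m} sin(b log ω)` vanish. -/
theorem omega_half_power_integrals
    (k : ℕ) (hk : 1 ≤ k) (R : ℝ) (hR : 0 < R)
    (x : EuclideanSpace ℝ (Fin (k + 1))) (hx : ‖x‖ ≠ R) (b : ℝ) :
    (∫ y in Metric.sphere (0 : EuclideanSpace ℝ (Fin (k + 1))) R,
        ((|‖x‖ ^ 2 - ‖y‖ ^ 2| / ‖x - y‖ ^ 2 : ℝ) : ℂ) ^ ((k : ℂ) / 2 + Complex.I * b) ∂μH[k]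
      = ((∫ y in Metric.sphere (0 : EuclideanSpace ℝ (Fin (k + 1))) R,
          (|‖x‖ ^ 2 - ‖y‖ ^ 2| / ‖x - y‖ ^ 2) ^ ((k : ℝ) / 2)
            * Real.cos (b * Real.log (|‖x‖ ^ 2 - ‖y‖ ^ 2| / ‖x - y‖ ^ 2)) ∂μH[k] : ℝ) : ℂ))
    ∧ (∀ m : ℕ,
        (∫ y in Metric.sphere (0 : EuclideanSpace ℝ (Fin (k + 1))) R,
            (|‖x‖ ^ 2 - ‖y‖ ^ 2| / ‖x - y‖ ^ 2) ^ ((k : ℝ) / 2)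
              * (Real.log (|‖x‖ ^ 2 - ‖y‖ ^ 2| / ‖x - y‖ ^ 2)) ^ (2 * m + 1)
              * Real.cos (b * Real.log (|‖x‖ ^ 2 - ‖y‖ ^ 2| / ‖x - y‖ ^ 2)) ∂μH[k] = 0)
        ∧ (∫ y in Metric.sphere (0 : EuclideanSpace ℝ (Fin (k + 1))) R,
            (|‖x‖ ^ 2 - ‖y‖ ^ 2| / ‖x - y‖ ^ 2) ^ ((k : ℝ) / 2)
              * (Real.log (|‖x‖ ^ 2 - ‖y‖ ^ 2| / ‖x - y‖ ^ 2)) ^ (2 * m)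
              * Real.sin (b * Real.log (|‖x‖ ^ 2 - ‖y‖ ^ 2| / ‖x - y‖ ^ 2)) ∂μH[k] = 0)) :=
  omega_half_power_integrals_general (by simp) R hx b
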